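/- arXiv:1608.06423 — 5 statements merged into one kernel-verified Lean document; each statement's English description precedes it below -/
import Mathlib

section
/- Let m, m', Q, Q' be positive integers and let a, a', u, v be integers with Qau + mv = 1 and am' − a'm ≠ 0. Let τ = x + iy with x = (amQ + a'm'Q')/(m²Q + m'²Q') and y = √(QQ')·|am' − a'm|/(m²Q + m'²Q'). Then (Quτ + v)/(−Qmτ + Qa) = (Qa'u + m'v)/(Q·(am' − a'm)) + i/(√(QQ')·|am' − a'm|). -/
/-!
Write `D = a m' - a' m` and `t = √(Q Q') |D|`, so that `t² = Q Q' D²`. A Möbius transformation of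
determinant `δ` satisfies `W z - W w = δ (z - w) / ((c z + d) (c w + d))`. With `w = a' / m'`, the
first term on the right-hand side of the theorem is `W (a' / m')`, so everything reduces to
`t (m' τ - a') = i Q D (a - m τ)`: the ratio `(m' τ - a') / (a - m τ)` is purely imaginary because
`τ` lies on the geodesic joining the two cusps, and its modulus `√(Q / Q')` singles out `τ` there.
-/

open Complex

section Moebius

variable {K : Type*} [Field K]

-- The second point is `p / q` in homogeneous coordinates, so that `q = 0` stands for `∞`.
theorem moebius_eq_moebius_add {α β γ δ z p q : K} (hz : γ * z + δ ≠ 0)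
    (hpq : γ * p + δ * q ≠ 0) :
    (α * z + β) / (γ * z + δ) = (α * p + β * q) / (γ * p + δ * q) +
      (α * δ - β * γ) * (q * z - p) / ((γ * z + δ) * (γ * p + δ * q)) := by
  rw [div_add_div _ _ hpq (mul_ne_zero hz hpq),
    div_eq_div_iff hz (mul_ne_zero hpq (mul_ne_zero hz hpq))]
  ring

end Moebius

/-- The point at which a path between the cusps `a / m` and `a' / m'`, of widths `Q` and `Q'`, is
split; `τ` in the paper. The parameters are real, and `m = 0` encodes the cusp `∞`. -/
noncomputable def splittingPoint (a m Q a' m' Q' : ℝ) : ℂ :=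
  (((a * m * Q + a' * m' * Q') / (m ^ 2 * Q + m' ^ 2 * Q') : ℝ) : ℂ) +
    ((√(Q * Q') * |a * m' - a' * m| / (m ^ 2 * Q + m' ^ 2 * Q') : ℝ) : ℂ) * I

section SplittingPoint

variable {a m Q a' m' Q' : ℝ}

theorem splittingPoint_comm (a m Q a' m' Q' : ℝ) :
    splittingPoint a m Q a' m' Q' = splittingPoint a' m' Q' a m Q := by
  simp only [splittingPoint, abs_sub_comm (a * m'), mul_comm Q Q', add_comm (a * m * Q),
    add_comm (m ^ 2 * Q)]

theorem sq_mul_add_sq_mul_pos (hQ : 0 < Q) (hQ' : 0 < Q') (hD : a * m' - a' * m ≠ 0) :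
    0 < m ^ 2 * Q + m' ^ 2 * Q' := by
  by_cases hm : m = 0
  · have hm' : m' ≠ 0 := by
      rintro rfl
      simp [hm] at hD
    positivity
  · positivity

theorem mul_splittingPoint_sub (hN : m ^ 2 * Q + m' ^ 2 * Q' ≠ 0) :
    m' * splittingPoint a m Q a' m' Q' - a' =
      (m * Q * (a * m' - a' * m) + m' * (√(Q * Q') * |a * m' - a' * m| : ℝ) * I) /
        (m ^ 2 * Q + m' ^ 2 * Q') := by
  have hN' : (m : ℂ) ^ 2 * Q + (m' : ℂ) ^ 2 * Q' ≠ 0 := mod_cast hN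
  rw [splittingPoint, eq_div_iff hN']
  push_cast
  field_simp
  ring

theorem sub_mul_splittingPoint (hN : m ^ 2 * Q + m' ^ 2 * Q' ≠ 0) :
    a - m * splittingPoint a m Q a' m' Q' =
      (m' * Q' * (a * m' - a' * m) - m * (√(Q * Q') * |a * m' - a' * m| : ℝ) * I) /
        (m ^ 2 * Q + m' ^ 2 * Q') := by
  rw [add_comm] at hN
  rw [← neg_sub, splittingPoint_comm, mul_splittingPoint_sub hN, mul_comm Q', abs_sub_comm,
    add_comm ((m' : ℂ) ^ 2 * Q'), ← neg_div]
  ring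

theorem sqrt_mul_abs_mul_splittingPoint_sub (hQQ' : 0 ≤ Q * Q')
    (hN : m ^ 2 * Q + m' ^ 2 * Q' ≠ 0) :
    (√(Q * Q') * |a * m' - a' * m| : ℝ) * (m' * splittingPoint a m Q a' m' Q' - a') =
      I * Q * (a * m' - a' * m) * (a - m * splittingPoint a m Q a' m' Q') := by
  rw [mul_splittingPoint_sub hN, sub_mul_splittingPoint hN, mul_div_assoc', mul_div_assoc']
  have ht : (√(Q * Q') * |a * m' - a' * m|) ^ 2 = Q * Q' * (a * m' - a' * m) ^ 2 := by
    rw [mul_pow, Real.sq_sqrt hQQ', sq_abs]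
  have htC : ((√(Q * Q') * |a * m' - a' * m| : ℝ) : ℂ) ^ 2 =
      Q * Q' * (a * m' - a' * m) ^ 2 := mod_cast congrArg ofReal ht
  congr 1
  linear_combination I * m' * htC +
    Q * (a * m' - a' * m) * m * (√(Q * Q') * |a * m' - a' * m| : ℝ) * I_sq

theorem sub_mul_splittingPoint_ne_zero (hQ : 0 < Q) (hQ' : 0 < Q') (hD : a * m' - a' * m ≠ 0) :
    a - m * splittingPoint a m Q a' m' Q' ≠ 0 := by
  intro hτ
  have hτ' : m' * splittingPoint a m Q a' m' Q' - a' = 0 := by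
    have hmul := sqrt_mul_abs_mul_splittingPoint_sub (a := a) (a' := a') (mul_pos hQ hQ').le
      (sq_mul_add_sq_mul_pos hQ hQ' hD).ne'
    rw [hτ, mul_zero] at hmul
    have ht : √(Q * Q') * |a * m' - a' * m| ≠ 0 := by positivity
    exact (mul_eq_zero.mp hmul).resolve_left (mod_cast ht)
  have hDC : (a : ℂ) * m' - a' * m = 0 := by linear_combination m' * hτ + m * hτ'
  exact hD (mod_cast hDC)

end SplittingPoint

theorem atkin_lehner_image_two_cusps_general {a m Q a' m' Q' u v : ℝ} (hQ : 0 < Q) (hQ' : 0 < Q')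
    (h : Q * a * u + m * v = 1) (hD : a * m' - a' * m ≠ 0) :
    (Q * u * splittingPoint a m Q a' m' Q' + v) / (-Q * m * splittingPoint a m Q a' m' Q' + Q * a) =
      (Q * a' * u + m' * v) / (Q * (a * m' - a' * m)) +
        I / (√(Q * Q') * |a * m' - a' * m| : ℝ) := by
  have hratio := sqrt_mul_abs_mul_splittingPoint_sub (a := a) (a' := a') (mul_pos hQ hQ').le
    (sq_mul_add_sq_mul_pos hQ hQ' hD).ne'
  have hτ := sub_mul_splittingPoint_ne_zero hQ hQ' hD
  set τ := splittingPoint a m Q a' m' Q'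
  have ht : ((√(Q * Q') * |a * m' - a' * m| : ℝ) : ℂ) ≠ 0 :=
    ofReal_ne_zero.mpr (by positivity)
  have hQC : (Q : ℂ) ≠ 0 := mod_cast hQ.ne'
  have hDC : (a : ℂ) * m' - a' * m ≠ 0 := mod_cast hD
  have hdet : (Q : ℂ) * u * (Q * a) - v * (-Q * m) = Q := by
    have hC : (Q : ℂ) * a * u + m * v = 1 := mod_cast h
    linear_combination Q * hC
  have hden : -Q * m * τ + Q * a = Q * (a - m * τ) := by ring
  have hden' : -Q * m * a' + Q * a * m' = Q * ((a : ℂ) * m' - a' * m) := by ring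
  rw [moebius_eq_moebius_add (p := (a' : ℂ)) (q := (m' : ℂ)) (hden ▸ mul_ne_zero hQC hτ)
    (hden' ▸ mul_ne_zero hQC hDC), hdet, hden, hden', mul_assoc (Q : ℂ) (a - m * τ),
    mul_div_mul_left _ _ hQC]
  congr 1
  · ring
  · rw [div_eq_div_iff (mul_ne_zero hτ (mul_ne_zero hQC hDC)) ht]
    linear_combination hratio

/-- Image of the optimal splitting point between two cusps under the
Atkin–Lehner involution `W_r`. -/
theorem atkin_lehner_image_two_cusps (m m' Q Q' : ℤ)
    (hm : 0 < m) (hm' : 0 < m') (hQ : 0 < Q) (hQ' : 0 < Q')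
    (a a' u v : ℤ) (h : Q * a * u + m * v = 1) (hd : a * m' - a' * m ≠ 0) :
    let x : ℝ := ((a : ℝ) * m * Q + (a' : ℝ) * m' * Q') /
      ((m : ℝ) ^ 2 * Q + (m' : ℝ) ^ 2 * Q')
    let y : ℝ := Real.sqrt ((Q : ℝ) * (Q' : ℝ)) * |(a : ℝ) * m' - (a' : ℝ) * m| /
      ((m : ℝ) ^ 2 * Q + (m' : ℝ) ^ 2 * Q')
    let τ : ℂ := (x : ℂ) + (y : ℂ) * Complex.I
    ((Q : ℂ) * u * τ + v) / (-(Q : ℂ) * m * τ + Q * a) =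
      ((Q * a' * u + m' * v : ℤ) : ℂ) / ((Q : ℂ) * ((a : ℂ) * m' - (a' : ℂ) * m)) +
        Complex.I / ((Real.sqrt ((Q : ℝ) * (Q' : ℝ)) : ℂ) *
          ((|(a : ℝ) * m' - (a' : ℝ) * m| : ℝ) : ℂ)) := by
  intro x y τ
  have hτ : τ = splittingPoint a m Q a' m' Q' := rfl
  have hQR : (0 : ℝ) < Q := mod_cast hQ
  have hQR' : (0 : ℝ) < Q' := mod_cast hQ'
  have hR : (Q : ℝ) * a * u + m * v = 1 := mod_cast h
  have hdR : (a : ℝ) * m' - a' * m ≠ 0 := mod_cast hd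
  rw [hτ, ← ofReal_mul]
  exact_mod_cast atkin_lehner_image_two_cusps_general hQR hQR' hR hdR
end

section
/- Let N ≥ 1 be a real number, set C = √N/(2π), and let γ: ℝ² → ℝ be defined by γ(x, y) = C·(g(|x|) + g(|y|)) where g(s) = s·log(s√N) for s > 0 and g(0) = 0. Let L be a nonempty subset of ℤ² not containing the origin. Let (x₀, y₀) ∈ L be a point at which γ attains its minimum over L, and let (x₁, y₁) ∈ L be a point at which |x| + |y| attains its minimum over L; set A = |x₁| + |y₁| and assume A√N > 2. Then γ(x₁, y₁)·log(A√N/2) ≤ γ(x₀, y₀)·log(A√N); in particular γ(x₁, y₁)/γ(x₀, y₀) ≤ 1/(1 − log 2/log(A√N)). -/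
/-!
Put `t i = |v i| * √N`, so that `2π γ(v) = ∑ i, t i * log (t i)`. On nonnegative vectors with `n`
coordinates and sum `T` this is at most `T * log T` (monotonicity of `log`) and at least
`T * log (T / n)` (Jensen for `x * log x`). For `T ≥ n` the lower bound increases with `T`, so it
also holds at every vector of larger sum, and the two bounds at `T` differ only by the factor
`log T / log (T / n)`.
-/

section SumMulLog

open Real
open scoped Finset

variable {ι : Type*} {s : Finset ι} {a b : ι → ℝ}

theorem sum_mul_log_le_mul_log_sum (ha : ∀ i ∈ s, 0 ≤ a i) :
    ∑ i ∈ s, a i * log (a i) ≤ (∑ i ∈ s, a i) * log (∑ i ∈ s, a i) := by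
  rw [Finset.sum_mul]
  refine Finset.sum_le_sum fun i hi ↦ ?_
  rcases (ha i hi).eq_or_lt with hi₀ | hi₀
  · simp only [← hi₀, zero_mul, le_refl]
  · gcongr
    exact Finset.single_le_sum ha hi

theorem mul_log_sum_div_card_le_sum_mul_log (ha : ∀ i ∈ s, 0 ≤ a i) :
    (∑ i ∈ s, a i) * log ((∑ i ∈ s, a i) / #s) ≤ ∑ i ∈ s, a i * log (a i) := by
  rcases s.eq_empty_or_nonempty with rfl | hs
  · simp
  have hcard : (0 : ℝ) < #s := by exact_mod_cast hs.card_pos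
  have jensen := convexOn_mul_log.map_sum_le (t := s) (w := fun _ ↦ (#s : ℝ)⁻¹) (p := a)
    (fun _ _ ↦ by positivity) (by simp [hcard.ne']) ha
  simp only [smul_eq_mul, ← Finset.mul_sum, mul_assoc] at jensen
  rw [div_eq_inv_mul]
  exact le_of_mul_le_mul_left jensen (inv_pos.mpr hcard)

theorem mul_log_div_card_le_sum_mul_log {T : ℝ} (hb : ∀ i ∈ s, 0 ≤ b i)
    (hT : #s ≤ T) (hTb : T ≤ ∑ i ∈ s, b i) :
    T * log (T / #s) ≤ ∑ i ∈ s, b i * log (b i) := by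
  refine le_trans ?_ (mul_log_sum_div_card_le_sum_mul_log hb)
  rcases s.eq_empty_or_nonempty with rfl | hs
  · simp
  have hcard : (0 : ℝ) < #s := by exact_mod_cast hs.card_pos
  have hT₀ : 0 < T := hcard.trans_le hT
  have hb₀ : 0 ≤ ∑ i ∈ s, b i := Finset.sum_nonneg hb
  have hlog : 0 ≤ log (T / #s) := log_nonneg ((one_le_div hcard).mpr hT)
  gcongr

theorem sum_mul_log_pos (ha : ∀ i ∈ s, 0 ≤ a i) (hcard : #s < ∑ i ∈ s, a i) :
    0 < ∑ i ∈ s, a i * log (a i) := by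
  rcases s.eq_empty_or_nonempty with rfl | hs
  · simp at hcard
  have hcard₀ : (0 : ℝ) < #s := by exact_mod_cast hs.card_pos
  have hlog : 0 < log ((∑ i ∈ s, a i) / #s) := log_pos ((one_lt_div hcard₀).mpr hcard)
  exact (mul_pos (hcard₀.trans hcard) hlog).trans_le (mul_log_sum_div_card_le_sum_mul_log ha)

theorem sum_mul_log_mul_log_le (ha : ∀ i ∈ s, 0 ≤ a i) (hb : ∀ i ∈ s, 0 ≤ b i)
    (hcard : #s ≤ ∑ i ∈ s, a i) (hab : ∑ i ∈ s, a i ≤ ∑ i ∈ s, b i) :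
    (∑ i ∈ s, a i * log (a i)) * log ((∑ i ∈ s, a i) / #s) ≤
      (∑ i ∈ s, b i * log (b i)) * log (∑ i ∈ s, a i) := by
  rcases s.eq_empty_or_nonempty with rfl | hs
  · simp
  have hcard_one : (1 : ℝ) ≤ #s := by exact_mod_cast hs.card_pos
  set T := ∑ i ∈ s, a i
  have hlog : 0 ≤ log T := log_nonneg (hcard_one.trans hcard)
  have hlog_div : 0 ≤ log (T / #s) := log_nonneg ((one_le_div (by positivity)).mpr hcard)
  calc (∑ i ∈ s, a i * log (a i)) * log (T / #s)
      ≤ T * log T * log (T / #s) := by gcongr; exact sum_mul_log_le_mul_log_sum ha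
    _ = T * log (T / #s) * log T := mul_right_comm _ _ _
    _ ≤ (∑ i ∈ s, b i * log (b i)) * log T := by
      gcongr; exact mul_log_div_card_le_sum_mul_log hb hcard hab

theorem one_div_one_sub_log_div_log {n T : ℝ} (hn : n ≠ 0) (hT : log T ≠ 0) :
    1 / (1 - log n / log T) = log T / log (T / n) := by
  have hT₀ : T ≠ 0 := fun h ↦ hT (by rw [h, log_zero])
  rw [one_sub_div hT, one_div_div, log_div hT₀ hn]

end SumMulLog

section ManinCost

open Real

variable {ι : Type*} [Fintype ι]

/-- The cost function `γ` of level `N`, on real vectors with any finite number of coordinates.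
No case distinction is made at a zero coordinate, since `Real.log 0 = 0`. -/
noncomputable def maninCost (N : ℝ) (v : ι → ℝ) : ℝ :=
  √N / (2 * π) * ∑ i, |v i| * log (|v i| * √N)

theorem maninCost_eq_sum_mul_log (N : ℝ) (v : ι → ℝ) :
    maninCost N v = (2 * π)⁻¹ * ∑ i, |v i| * √N * log (|v i| * √N) := by
  simp only [maninCost, Finset.mul_sum]
  exact Finset.sum_congr rfl fun i _ ↦ by ring

theorem eq_maninCost_pair {N : ℝ} {g : ℝ → ℝ} {γ : ℝ → ℝ → ℝ}
    (hg : ∀ s, 0 < s → g s = s * log (s * √N)) (hg0 : g 0 = 0)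
    (hγ : ∀ x y, γ x y = √N / (2 * π) * (g |x| + g |y|)) (x y : ℝ) :
    γ x y = maninCost N ![x, y] := by
  have hg_abs (z : ℝ) : g |z| = |z| * log (|z| * √N) := by
    rcases (abs_nonneg z).eq_or_lt with hz | hz
    · rw [← hz, hg0, zero_mul]
    · exact hg _ hz
  simp [maninCost, hγ, hg_abs]

theorem maninCost_pos {N : ℝ} {v : ι → ℝ} (hv : Fintype.card ι < (∑ i, |v i|) * √N) :
    0 < maninCost N v := by
  rw [Finset.sum_mul] at hv
  rw [maninCost_eq_sum_mul_log]
  exact mul_pos (by positivity) (sum_mul_log_pos (fun i _ ↦ by positivity) hv)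

theorem maninCost_mul_log_le {N : ℝ} {u v : ι → ℝ} (huv : ∑ i, |u i| ≤ ∑ i, |v i|)
    (hu : Fintype.card ι ≤ (∑ i, |u i|) * √N) :
    maninCost N u * log ((∑ i, |u i|) * √N / Fintype.card ι) ≤
      maninCost N v * log ((∑ i, |u i|) * √N) := by
  have huv_scaled : ∑ i, |u i| * √N ≤ ∑ i, |v i| * √N := by
    simp only [← Finset.sum_mul]
    gcongr
  rw [Finset.sum_mul] at hu ⊢
  rw [maninCost_eq_sum_mul_log, maninCost_eq_sum_mul_log, mul_assoc, mul_assoc]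
  gcongr ?_ * ?_
  exact sum_mul_log_mul_log_le (fun i _ ↦ by positivity) (fun i _ ↦ by positivity) hu huv_scaled

theorem l1_min_vs_cost_min_general {N : ℝ} {u v : ι → ℝ} (huv : ∑ i, |u i| ≤ ∑ i, |v i|)
    (hu : Fintype.card ι < (∑ i, |u i|) * √N) :
    maninCost N u * log ((∑ i, |u i|) * √N / Fintype.card ι) ≤
      maninCost N v * log ((∑ i, |u i|) * √N) ∧
    maninCost N u / maninCost N v ≤
      1 / (1 - log (Fintype.card ι) / log ((∑ i, |u i|) * √N)) := by
  have hmul := maninCost_mul_log_le huv hu.le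
  rcases isEmpty_or_nonempty ι with _ | _
  · simp at hu
  have hcard : (1 : ℝ) ≤ Fintype.card ι := by exact_mod_cast Fintype.card_pos
  have hlog : 0 < log ((∑ i, |u i|) * √N) := log_pos (hcard.trans_lt hu)
  have hlog_div : 0 < log ((∑ i, |u i|) * √N / Fintype.card ι) :=
    log_pos ((one_lt_div (by positivity)).mpr hu)
  have hv : 0 < maninCost N v := maninCost_pos (hu.trans_le (by gcongr))
  refine ⟨hmul, ?_⟩
  rw [one_div_one_sub_log_div_log (by positivity) hlog.ne', div_le_div_iff₀ hv hlog_div]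
  rwa [mul_comm (log _)]

end ManinCost

/-- Minimizing the ℓ¹-norm is asymptotically as good as minimizing the cost
function `γ(x,y) = (√N/(2π))·(|x|log(|x|√N) + |y|log(|y|√N))`. -/
theorem l1_min_vs_cost_min (N : ℝ) (hN : 1 ≤ N)
    (g : ℝ → ℝ) (hg : ∀ s : ℝ, 0 < s → g s = s * Real.log (s * Real.sqrt N))
    (hg0 : g 0 = 0)
    (γ : ℝ → ℝ → ℝ)
    (hγ : ∀ x y : ℝ, γ x y = Real.sqrt N / (2 * Real.pi) * (g |x| + g |y|))
    (L : Set (ℤ × ℤ)) (hL : L.Nonempty) (h0 : (0, 0) ∉ L)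
    (p₀ : ℤ × ℤ) (hp₀ : p₀ ∈ L)
    (hmin₀ : ∀ p ∈ L, γ (p₀.1 : ℝ) (p₀.2 : ℝ) ≤ γ (p.1 : ℝ) (p.2 : ℝ))
    (p₁ : ℤ × ℤ) (hp₁ : p₁ ∈ L)
    (hmin₁ : ∀ p ∈ L, |p₁.1| + |p₁.2| ≤ |p.1| + |p.2|)
    (A : ℝ) (hA : A = (|p₁.1| : ℝ) + (|p₁.2| : ℝ)) (hA2 : 2 < A * Real.sqrt N) :
    γ (p₁.1 : ℝ) (p₁.2 : ℝ) * Real.log (A * Real.sqrt N / 2) ≤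
      γ (p₀.1 : ℝ) (p₀.2 : ℝ) * Real.log (A * Real.sqrt N) ∧
    γ (p₁.1 : ℝ) (p₁.2 : ℝ) / γ (p₀.1 : ℝ) (p₀.2 : ℝ) ≤
      1 / (1 - Real.log 2 / Real.log (A * Real.sqrt N)) := by
  have hle : |(p₁.1 : ℝ)| + |(p₁.2 : ℝ)| ≤ |(p₀.1 : ℝ)| + |(p₀.2 : ℝ)| := mod_cast hmin₁ p₀ hp₀
  simpa [eq_maninCost_pair hg hg0 hγ, hA] using
    l1_min_vs_cost_min_general (u := ![(p₁.1 : ℝ), p₁.2]) (v := ![(p₀.1 : ℝ), p₀.2])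
      (by simpa using hle) (by simpa [hA] using hA2)
end

section
/- Let N be a positive integer and let u, v be integers. Let (x, y) be a nonzero element of Λ_{(u:v)} such that for every integer b > 1 it is not the case that b divides both x and y with (x/b, y/b) ∈ Λ_{(u:v)}. Then gcd(x, y) divides N. -/
/-- The lattice of integer representatives of the point `(u : v)` of `ℙ¹(ℤ/Nℤ)`. -/
def repLattice (N : ℕ) (u v : ℤ) : Set (ℤ × ℤ) := {p | (N : ℤ) ∣ p.1 * v - p.2 * u}

/-!
The lattice is cut out by the condition `N ∣ f p` for a linear form `f`. If `g • w` satisfies it,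
then `N ∣ g * f w`, hence already `N ∣ gcd N g * f w`, and so `gcd N g • w` lies in the lattice.
Writing `g = gcd N g * b`, the vector `g • w` is `b` times a lattice vector; primitivity makes `b`
a unit, so `g` is associated to `gcd N g`, which divides `N`.
-/

section LinearForm

variable {R M : Type*} [CommSemiring R] [GCDMonoid R] [AddCommMonoid M] [Module R M]

theorem dvd_map_gcd_smul_iff (f : M →ₗ[R] R) {n g : R} {w : M} :
    n ∣ f (gcd n g • w) ↔ n ∣ f (g • w) := by
  rw [map_smul, map_smul, smul_eq_mul, smul_eq_mul, dvd_gcd_mul_iff_dvd_mul]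

theorem content_dvd_level_general (f : M →ₗ[R] R) {n g : R} {w : M} (hmem : n ∣ f (g • w))
    (hprim : ∀ (b : R) (z : M), n ∣ f z → b • z = g • w → IsUnit b) : g ∣ n := by
  obtain ⟨b, hb⟩ := gcd_dvd_right n g
  have hb_unit : IsUnit b :=
    hprim b (gcd n g • w) ((dvd_map_gcd_smul_iff f).mpr hmem) (by rw [smul_smul, mul_comm, ← hb])
  rw [hb, hb_unit.mul_right_dvd]
  exact gcd_dvd_left n g

end LinearForm

/-- The linear form `(c, d) ↦ c * v - d * u`, whose values divisible by `N` cut out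
`repLattice N u v`; the sign convention makes `mem_repLattice_iff` hold definitionally. -/
def repForm (u v : ℤ) : ℤ × ℤ →ₗ[ℤ] ℤ :=
  (LinearMap.fst ℤ ℤ ℤ).smulRight v - (LinearMap.snd ℤ ℤ ℤ).smulRight u

theorem mem_repLattice_iff {N : ℕ} {u v : ℤ} {p : ℤ × ℤ} :
    p ∈ repLattice N u v ↔ (N : ℤ) ∣ repForm u v p :=
  Iff.rfl

theorem smul_mem_repLattice {N : ℕ} {u v : ℤ} {p : ℤ × ℤ} (c : ℤ) (hp : p ∈ repLattice N u v) :
    c • p ∈ repLattice N u v := by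
  rw [mem_repLattice_iff, map_smul, smul_eq_mul]
  exact dvd_mul_of_dvd_right hp c

theorem isUnit_of_smul_eq_of_mem_repLattice {N : ℕ} {u v x y : ℤ} (hne : ¬(x = 0 ∧ y = 0))
    (hprim : ∀ b : ℤ, 1 < b → ¬(b ∣ x ∧ b ∣ y ∧ (x / b, y / b) ∈ repLattice N u v))
    {b : ℤ} {z : ℤ × ℤ} (hz : z ∈ repLattice N u v) (hbz : b • z = (x, y)) : IsUnit b := by
  have hb : b ≠ 0 := by
    rintro rfl
    exact hne (by simpa [Prod.ext_iff, eq_comm] using hbz)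
  by_contra hunit
  have hb_abs : 1 < |b| := by
    have habs_pos : 0 < |b| := abs_pos.mpr hb
    rw [Int.isUnit_iff_abs_eq] at hunit
    omega
  -- `hprim` only speaks of positive divisors, so the sign of `b` is moved into the lattice vector.
  have habs : |b| • (b.sign • z) = (x, y) := by
    rw [smul_smul, mul_comm, Int.sign_mul_abs, hbz]
  obtain ⟨hx, hy⟩ : |b| * (b.sign • z).1 = x ∧ |b| * (b.sign • z).2 = y := Prod.ext_iff.mp habs
  refine hprim |b| hb_abs ⟨⟨_, hx.symm⟩, ⟨_, hy.symm⟩, ?_⟩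
  rw [Int.ediv_eq_of_eq_mul_right (abs_ne_zero.mpr hb) hx.symm,
    Int.ediv_eq_of_eq_mul_right (abs_ne_zero.mpr hb) hy.symm]
  exact smul_mem_repLattice b.sign hz

theorem exists_gcd_smul_eq (x y : ℤ) : ∃ w : ℤ × ℤ, (Int.gcd x y : ℤ) • w = (x, y) := by
  obtain ⟨c, hc⟩ := Int.gcd_dvd_left x y
  obtain ⟨d, hd⟩ := Int.gcd_dvd_right x y
  exact ⟨(c, d), Prod.ext hc.symm hd.symm⟩

/-- The content of a primitive-in-the-lattice vector of `Λ_{(u:v)}` divides `N`. -/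
theorem content_dvd_level (N : ℕ) (hN : 0 < N) (u v : ℤ) (x y : ℤ)
    (hmem : (x, y) ∈ repLattice N u v) (hne : ¬(x = 0 ∧ y = 0))
    (hprim : ∀ b : ℤ, 1 < b → ¬(b ∣ x ∧ b ∣ y ∧ (x / b, y / b) ∈ repLattice N u v)) :
    (Int.gcd x y : ℤ) ∣ (N : ℤ) := by
  obtain ⟨w, hw⟩ := exists_gcd_smul_eq x y
  exact content_dvd_level_general (repForm u v) (hw ▸ hmem) fun b z hz hbz =>
    isUnit_of_smul_eq_of_mem_repLattice hne hprim hz (hbz.trans hw)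
end

section
/- Let p be a prime number and let u, v be integers not both divisible by p. Then there exist integers c, d with gcd(c, d) = 1, c·v ≡ d·u (mod p), and |c| + |d| ≤ √(2p). -/
/-!
The solutions `(c, d)` of `c * v ≡ d * u [ZMOD p]` form a subgroup `L` of `ℤ²`, of index `p` since
`(u, v)` is nonzero modulo `p`. The map `(c, d) ↦ (c + d, c - d)` turns the `ℓ¹`-norm into the sup
norm and doubles the index, so the pigeonhole principle in a square with more than `2 * p` lattice
points gives a nonzero vector of `L` of `ℓ¹`-norm at most `√(2 * p)`. If `p` is odd this is less
than `p`; the gcd of the two coordinates is then prime to the index of `L`, so dividing by it does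
not leave `L`. If `p = 2`, one of `(1, 0)`, `(0, 1)`, `(1, 1)` lies in `L`.
-/

open Finset

theorem exists_ne_neg_add_mem_of_index_lt_card {G : Type*} [AddGroup G] (H : AddSubgroup G)
    [H.FiniteIndex] {s : Finset G} (hs : H.index < #s) :
    ∃ x ∈ s, ∃ y ∈ s, x ≠ y ∧ -x + y ∈ H := by
  have := H.fintypeQuotientOfFiniteIndex
  have hcard : #(univ : Finset (G ⧸ H)) < #s := by
    rwa [card_univ, ← Nat.card_eq_fintype_card]
  obtain ⟨x, hx, y, hy, hne, hxy⟩ := exists_ne_map_eq_of_card_lt_of_maps_to hcard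
    (f := ((↑) : G → G ⧸ H)) fun _ _ ↦ mem_coe.2 (mem_univ _)
  exact ⟨x, hx, y, hy, hne, QuotientAddGroup.eq.1 hxy⟩

theorem exists_ne_zero_mem_forall_abs_le {ι : Type*} [Fintype ι] (H : AddSubgroup (ι → ℤ))
    [H.FiniteIndex] {m : ℕ} (hm : H.index < (m + 1) ^ Fintype.card ι) :
    ∃ x ∈ H, x ≠ 0 ∧ ∀ i, |x i| ≤ m := by
  classical
  have hcard : #(Icc (0 : ι → ℤ) fun _ ↦ (m : ℤ)) = (m + 1) ^ Fintype.card ι := by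
    simp [Pi.card_Icc]
  obtain ⟨x, hx, y, hy, hne, hmem⟩ := exists_ne_neg_add_mem_of_index_lt_card H (hcard ▸ hm)
  rw [mem_Icc] at hx hy
  refine ⟨-x + y, hmem, fun h ↦ hne (neg_add_eq_zero.1 h), fun i ↦ ?_⟩
  have hx_nonneg : 0 ≤ x i := hx.1 i
  have hx_le : x i ≤ m := hx.2 i
  have hy_nonneg : 0 ≤ y i := hy.1 i
  have hy_le : y i ≤ m := hy.2 i
  rw [Pi.add_apply, Pi.neg_apply, abs_le]
  lia

/-- The endomorphism `(c, d) ↦ (c + d, c - d)` of `ℤ²`, which carries the `ℓ¹`-norm to the sup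
norm. -/
def sumDiff : (Fin 2 → ℤ) →+ (Fin 2 → ℤ) where
  toFun x := ![x 0 + x 1, x 0 - x 1]
  map_zero' := by simp
  map_add' x y := by
    ext i
    fin_cases i <;> simp [add_add_add_comm, add_sub_add_comm]

theorem sumDiff_apply (x : Fin 2 → ℤ) : sumDiff x = ![x 0 + x 1, x 0 - x 1] := rfl

theorem sumDiff_injective : Function.Injective sumDiff := by
  intro x y h
  have h₀ := congrFun h 0
  have h₁ := congrFun h 1
  simp only [sumDiff_apply, Matrix.cons_val_zero, Matrix.cons_val_one] at h₀ h₁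
  have hx₀ : x 0 = y 0 := by lia
  have hx₁ : x 1 = y 1 := by lia
  ext i
  fin_cases i <;> assumption

theorem mem_range_sumDiff {y : Fin 2 → ℤ} : y ∈ sumDiff.range ↔ Even (y 0 + y 1) := by
  constructor
  · rintro ⟨x, rfl⟩
    exact ⟨x 0, by simp [sumDiff_apply]⟩
  · rintro ⟨c, hc⟩
    have hsub : c - (y 0 - c) = y 1 := by lia
    refine ⟨![c, y 0 - c], ?_⟩
    ext i
    fin_cases i <;> simp [sumDiff_apply, hsub]

theorem index_range_sumDiff : sumDiff.range.index = 2 := by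
  refine AddSubgroup.index_eq_two_iff.2 ⟨![1, 0], fun y ↦ ?_⟩
  have hshift : (y + ![1, 0] : Fin 2 → ℤ) 0 + (y + ![1, 0] : Fin 2 → ℤ) 1 = y 0 + y 1 + 1 := by
    simp [add_right_comm]
  rw [mem_range_sumDiff, mem_range_sumDiff, hshift, Int.even_add_one]
  exact xor_not_left.2 Iff.rfl

theorem index_map_sumDiff (L : AddSubgroup (Fin 2 → ℤ)) :
    (L.map sumDiff).index = 2 * L.index := by
  rw [L.index_map_of_injective sumDiff_injective, index_range_sumDiff, mul_comm]

theorem exists_ne_zero_mem_abs_add_abs_le (L : AddSubgroup (Fin 2 → ℤ)) [L.FiniteIndex] {m : ℕ}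
    (hm : 2 * L.index < (m + 1) ^ 2) :
    ∃ x ∈ L, x ≠ 0 ∧ |x 0| + |x 1| ≤ m := by
  have hindex := index_map_sumDiff L
  have : (L.map sumDiff).FiniteIndex :=
    ⟨hindex ▸ mul_ne_zero two_ne_zero AddSubgroup.FiniteIndex.index_ne_zero⟩
  obtain ⟨_, ⟨x, hx, rfl⟩, hne, hle⟩ :=
    exists_ne_zero_mem_forall_abs_le (L.map sumDiff) (m := m) (by simpa [hindex] using hm)
  refine ⟨x, hx, fun h ↦ hne (by rw [h, map_zero]), ?_⟩
  have hadd : |x 0 + x 1| ≤ m := hle 0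
  have hsub : |x 0 - x 1| ≤ m := hle 1
  grind

theorem mem_of_nsmul_mem_of_coprime_index {A : Type*} [AddCommGroup A] {H : AddSubgroup A} {n : ℕ}
    (hn : n.Coprime H.index) {x : A} (hx : n • x ∈ H) : x ∈ H := by
  have hbezout : x = n.gcdA H.index • n • x + n.gcdB H.index • H.index • x := by
    have h := Nat.gcd_eq_gcd_ab n H.index
    rw [hn.gcd_eq_one, Nat.cast_one] at h
    rw [← natCast_zsmul x n, ← natCast_zsmul x H.index, smul_smul, smul_smul, ← add_smul,
      mul_comm _ (n : ℤ), mul_comm _ (H.index : ℤ), ← h, one_smul]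
  rw [hbezout]
  exact H.add_mem (H.zsmul_mem hx _) (H.zsmul_mem (H.nsmul_index_mem x) _)

theorem exists_eq_nsmul_isCoprime {x : Fin 2 → ℤ} (hx : x ≠ 0) :
    ∃ (g : ℕ) (y : Fin 2 → ℤ), 0 < g ∧ IsCoprime (y 0) (y 1) ∧ x = g • y := by
  have hgcd : 0 < Int.gcd (x 0) (x 1) := by
    rw [Int.gcd_pos_iff]
    by_contra! h
    exact hx (by ext i; fin_cases i <;> simp [h])
  obtain ⟨g, c, d, hg, hcd, hc, hd⟩ := Int.exists_gcd_one' hgcd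
  refine ⟨g, ![c, d], hg, Int.isCoprime_iff_gcd_eq_one.2 hcd, ?_⟩
  ext i
  fin_cases i <;> simp [hc, hd, mul_comm]

theorem exists_isCoprime_mem_of_abs_add_abs_lt_index {L : AddSubgroup (Fin 2 → ℤ)}
    (hL : L.index.Prime) {x : Fin 2 → ℤ} (hx : x ∈ L) (hx₀ : x ≠ 0)
    (hlt : |x 0| + |x 1| < L.index) :
    ∃ y ∈ L, IsCoprime (y 0) (y 1) ∧ |y 0| + |y 1| ≤ |x 0| + |x 1| := by
  obtain ⟨g, y, hg, hy, rfl⟩ := exists_eq_nsmul_isCoprime hx₀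
  have hnorm : |(g • y) 0| + |(g • y) 1| = g * (|y 0| + |y 1|) := by
    simp [abs_mul, mul_add]
  have hy_pos : 1 ≤ |y 0| + |y 1| := by
    rcases hy.ne_zero_or_ne_zero with h | h
    · exact Int.add_one_le_of_lt (add_pos_of_pos_of_nonneg (abs_pos.2 h) (abs_nonneg _))
    · exact Int.add_one_le_of_lt (add_pos_of_nonneg_of_pos (abs_nonneg _) (abs_pos.2 h))
  rw [hnorm] at hlt ⊢
  have hg_lt : g < L.index := by
    exact_mod_cast (le_mul_of_one_le_right (Nat.cast_nonneg g) hy_pos).trans_lt hlt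
  have hcop : g.Coprime L.index := (Nat.coprime_of_lt_prime hg.ne' hg_lt hL).symm
  exact ⟨y, mem_of_nsmul_mem_of_coprime_index hcop hx, hy,
    le_mul_of_one_le_left (by positivity) (by exact_mod_cast hg)⟩

theorem exists_isCoprime_mem_of_index_eq_two {L : AddSubgroup (Fin 2 → ℤ)} (hL : L.index = 2) :
    ∃ x ∈ L, IsCoprime (x 0) (x 1) ∧ |x 0| + |x 1| ≤ 2 := by
  by_cases h₁ : ![1, 0] ∈ L
  · exact ⟨_, h₁, isCoprime_one_left, by simp⟩
  by_cases h₂ : ![0, 1] ∈ L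
  · exact ⟨_, h₂, isCoprime_one_right, by simp⟩
  · have h : ![1, 1] ∈ L := by
      simpa using (AddSubgroup.add_mem_iff_of_index_two hL).2 (iff_of_false h₁ h₂)
    exact ⟨_, h, isCoprime_one_left, by simp⟩

theorem exists_isCoprime_mem_abs_add_abs_le_sqrt {L : AddSubgroup (Fin 2 → ℤ)}
    (hL : L.index.Prime) :
    ∃ x ∈ L, IsCoprime (x 0) (x 1) ∧ |x 0| + |x 1| ≤ (2 * L.index).sqrt := by
  rcases hL.eq_two_or_odd' with h₂ | hodd
  · simpa [h₂, show Nat.sqrt 4 = 2 from Nat.sqrt_eq 2] using exists_isCoprime_mem_of_index_eq_two h₂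
  have : L.FiniteIndex := ⟨hL.ne_zero⟩
  obtain ⟨x, hx, hx₀, hle⟩ := exists_ne_zero_mem_abs_add_abs_le L (Nat.lt_succ_sqrt' (2 * L.index))
  have hsqrt : (2 * L.index).sqrt < L.index := by
    rw [Nat.sqrt_lt]
    exact Nat.mul_lt_mul_of_pos_right (hL.odd_iff.1 hodd) hL.pos
  obtain ⟨y, hy, hcop, hyx⟩ := exists_isCoprime_mem_of_abs_add_abs_lt_index hL hx hx₀
    (hle.trans_lt (by exact_mod_cast hsqrt))
  exact ⟨y, hy, hcop, hyx.trans hle⟩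

/-- The linear form `(c, d) ↦ c * v - d * u` modulo `n`. -/
def crossForm (n : ℕ) (u v : ℤ) : (Fin 2 → ℤ) →+ ZMod n where
  toFun x := ((x 0 * v - x 1 * u : ℤ) : ZMod n)
  map_zero' := by simp
  map_add' x y := by
    simp only [Pi.add_apply]
    push_cast
    ring

/-- The lattice of integer vectors proportional to `(u, v)` modulo `n`. If `p` is prime and
`(u, v)` is nonzero modulo `p`, the vectors of `pointLattice p u v` that do not vanish modulo `p`
are the representatives of the point `(u : v)` of the projective line over `𝔽_p`. -/
def pointLattice (n : ℕ) (u v : ℤ) : AddSubgroup (Fin 2 → ℤ) :=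
  (crossForm n u v).ker

theorem mem_pointLattice {n : ℕ} {u v : ℤ} {x : Fin 2 → ℤ} :
    x ∈ pointLattice n u v ↔ (n : ℤ) ∣ x 0 * v - x 1 * u :=
  ZMod.intCast_zmod_eq_zero_iff_dvd _ n

theorem crossForm_surjective {n : ℕ} {u v : ℤ} (h : IsCoprime (Int.gcd u v : ℤ) n) :
    Function.Surjective (crossForm n u v) := by
  obtain ⟨a, b, hab⟩ := h
  intro z
  obtain ⟨k, rfl⟩ := ZMod.intCast_surjective z
  refine ⟨(k * a) • ![Int.gcdB u v, -Int.gcdA u v], ?_⟩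
  refine (ZMod.intCast_eq_intCast_iff_dvd_sub _ _ n).2 ⟨k * b, ?_⟩
  simp only [Pi.smul_apply, Matrix.cons_val_zero, Matrix.cons_val_one, smul_eq_mul]
  linear_combination (-k) * hab + k * a * Int.gcd_eq_gcd_ab u v

theorem index_pointLattice {n : ℕ} {u v : ℤ} (h : IsCoprime (Int.gcd u v : ℤ) n) :
    (pointLattice n u v).index = n := by
  rw [pointLattice, AddSubgroup.index_ker, AddMonoidHom.range_eq_top.2 (crossForm_surjective h),
    AddSubgroup.card_top, Nat.card_zmod]

/-- Every point of `ℙ¹(𝔽_p)` has a coprime representative of ℓ¹-norm at most `√(2p)`. -/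
theorem small_representative_prime (p : ℕ) (hp : p.Prime) (u v : ℤ)
    (huv : ¬((p : ℤ) ∣ u ∧ (p : ℤ) ∣ v)) :
    ∃ c d : ℤ, IsCoprime c d ∧ (p : ℤ) ∣ c * v - d * u ∧
      ((|c| + |d| : ℤ) : ℝ) ≤ Real.sqrt (2 * p) := by
  have hcop : IsCoprime (Int.gcd u v : ℤ) p :=
    ((Nat.prime_iff_prime_int.1 hp).coprime_iff_not_dvd.2 (by rwa [Int.dvd_coe_gcd_iff])).symm
  have hindex := index_pointLattice hcop
  obtain ⟨x, hx, hx_cop, hx_le⟩ := exists_isCoprime_mem_abs_add_abs_le_sqrt (hindex.symm ▸ hp)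
  rw [hindex] at hx_le
  refine ⟨x 0, x 1, hx_cop, mem_pointLattice.1 hx, ?_⟩
  calc ((|x 0| + |x 1| : ℤ) : ℝ) ≤ (2 * p).sqrt := by exact_mod_cast hx_le
    _ ≤ √(2 * p : ℕ) := Real.nat_sqrt_le_real_sqrt
    _ = √(2 * p) := by push_cast; rfl
end

section
/- Let N be a positive integer and let (x, y) ∈ ℤ² with gcd(x, y) = 1 and x² + y² < N. Then (x, y) is a shortest nonzero vector of the lattice Λ_{(x:y)}: every (c, d) ∈ ℤ² with c·y ≡ d·x (mod N) and c² + d² < x² + y² equals (0, 0). -/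
/-!
The determinant of `(x, y)` and a lattice vector `(c, d)` is a multiple of `N`, while by
Cauchy–Schwarz it is at most the product of the two lengths. For `(c, d)` shorter than `(x, y)` this
product is below `N`, so the determinant vanishes and `(c, d)` is an integer multiple of the
primitive vector `(x, y)`; only the zero multiple is shorter than `(x, y)`.
-/

theorem sq_det_le_mul_sq_add_sq {R : Type*} [CommRing R] [LinearOrder R] [IsStrictOrderedRing R]
    (c d x y : R) : (c * y - d * x) ^ 2 ≤ (c ^ 2 + d ^ 2) * (x ^ 2 + y ^ 2) := by
  rw [add_comm (x ^ 2), sq_add_sq_mul_sq_add_sq]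
  exact le_add_of_nonneg_right (sq_nonneg _)

theorem mul_eq_mul_of_dvd_sub_of_mul_sq_add_sq_lt {N c d x y : ℤ} (hdvd : N ∣ c * y - d * x)
    (hlt : (c ^ 2 + d ^ 2) * (x ^ 2 + y ^ 2) < N ^ 2) : c * y = d * x := by
  have hdet : (c * y - d * x) ^ 2 < N ^ 2 := (sq_det_le_mul_sq_add_sq c d x y).trans_lt hlt
  exact sub_eq_zero.mp <|
    Int.eq_zero_of_dvd_of_natAbs_lt_natAbs hdvd (Int.natAbs_lt_iff_sq_lt.mpr hdet)

theorem exists_eq_mul_of_isCoprime_of_mul_eq_mul {R : Type*} [CommSemiring R] {c d x y : R}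
    (hxy : IsCoprime x y) (h : c * y = d * x) : ∃ k, c = k * x ∧ d = k * y := by
  obtain ⟨a, b, hab⟩ := hxy
  refine ⟨a * c + b * d, ?_, ?_⟩
  · calc
      c = c * (a * x + b * y) := by rw [hab, mul_one]
      _ = a * c * x + b * (c * y) := by ring
      _ = (a * c + b * d) * x := by rw [h]; ring
  · calc
      d = d * (a * x + b * y) := by rw [hab, mul_one]
      _ = a * (d * x) + b * d * y := by ring
      _ = (a * c + b * d) * y := by rw [← h]; ring

theorem eq_zero_of_mul_sq_add_mul_sq_lt {k x y : ℤ}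
    (hlt : (k * x) ^ 2 + (k * y) ^ 2 < x ^ 2 + y ^ 2) : k = 0 := by
  have hfactor : k ^ 2 * (x ^ 2 + y ^ 2) < 1 * (x ^ 2 + y ^ 2) := by linarith
  have hk : k ^ 2 < 1 := lt_of_mul_lt_mul_right hfactor (by positivity)
  exact Int.abs_lt_one_iff.mp ((sq_lt_one_iff_abs_lt_one k).mp hk)

/-- A coprime vector `(x, y)` with `x² + y² < N` is a shortest nonzero vector
of the lattice `Λ_{(x:y)}` of level `N`. -/
theorem coprime_short_vector_is_minimal (N : ℕ) (hN : 0 < N) (x y : ℤ)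
    (hxy : IsCoprime x y) (hlt : x ^ 2 + y ^ 2 < (N : ℤ)) :
    ∀ c d : ℤ, (N : ℤ) ∣ c * y - d * x → c ^ 2 + d ^ 2 < x ^ 2 + y ^ 2 →
      c = 0 ∧ d = 0 := by
  intro c d hdvd hshort
  have hprod : (c ^ 2 + d ^ 2) * (x ^ 2 + y ^ 2) < (N : ℤ) ^ 2 :=
    sq (N : ℤ) ▸ mul_lt_mul'' (hshort.trans hlt) hlt (by positivity) (by positivity)
  have hdet : c * y = d * x := mul_eq_mul_of_dvd_sub_of_mul_sq_add_sq_lt hdvd hprod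
  obtain ⟨k, rfl, rfl⟩ := exists_eq_mul_of_isCoprime_of_mul_eq_mul hxy hdet
  have hk : k = 0 := eq_zero_of_mul_sq_add_mul_sq_lt hshort
  simp [hk]
end
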